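/- arXiv:2106.08896 — 2 statements merged into one kernel-verified Lean document; each statement's English description precedes it below -/
import Mathlib

section
/- Let C be a monoidal category and u : U ⟶ I a morphism such that m := λ_U ∘ (u ⊗ 𝟙_U) equals ρ_U ∘ (𝟙_U ⊗ u) and is invertible (a left idempotent satisfying the central equation). Then the endofunctor (– ⊗ U) : C ⥤ C carries a comonad structure with counit at A given by ρ_A ∘ (𝟙_A ⊗ u) : A ⊗ U ⟶ A and comultiplication at A given by α⁻¹_{A,U,U} ∘ (𝟙_A ⊗ m⁻¹) : A ⊗ U ⟶ (A ⊗ U) ⊗ U: these data are natural and satisfy the counit laws and coassociativity. Moreover this comonad is idempotent, since the comultiplication is a natural isomorphism. -/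
open CategoryTheory MonoidalCategory

/- A counital comultiplication that is invertible is automatically coassociative, because both
sides of coassociativity become equal after composition with an isomorphism built from the counit.
The central equation says that `m⁻¹` is counital on both sides, so it makes `U` a comonoid with
counit `u`. Tensoring on the right is a monoidal functor from `C` to its endofunctors, so it sends
the comonoid `U` to a comonoid in endofunctors, that is, to a comonad. -/

section Comonoid

variable {C : Type*} [Category C] [MonoidalCategory C] {X : C}

theorem whiskerLeft_comul_eq_whiskerRight_comul_associator
    (e : X ⟶ 𝟙_ C) (d : X ⟶ X ⊗ X) [IsIso d]
    (counit_comul : d ≫ e ▷ X = (λ_ X).inv) (comul_counit : d ≫ X ◁ e = (ρ_ X).inv) :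
    X ◁ d = d ▷ X ≫ (α_ X X X).hom := by
  have : IsIso (d ≫ e ▷ X) := counit_comul ▸ inferInstance
  have : IsIso (e ▷ X) := IsIso.of_isIso_comp_left d (e ▷ X)
  rw [← cancel_mono (X ◁ e ▷ X)]
  calc X ◁ d ≫ X ◁ e ▷ X
      = X ◁ (λ_ X).inv := by rw [← whiskerLeft_comp, counit_comul]
    _ = (ρ_ X).inv ▷ X ≫ (α_ X (𝟙_ C) X).hom := by simp
    _ = (d ≫ X ◁ e) ▷ X ≫ (α_ X (𝟙_ C) X).hom := by rw [comul_counit]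
    _ = (d ▷ X ≫ (α_ X X X).hom) ≫ X ◁ e ▷ X := by simp

/-- The comonoid structure given by a counital and invertible comultiplication, for which
coassociativity is not required as data. -/
abbrev comonObjOfIsIsoComul (e : X ⟶ 𝟙_ C) (d : X ⟶ X ⊗ X) [IsIso d]
    (counit_comul : d ≫ e ▷ X = (λ_ X).inv) (comul_counit : d ≫ X ◁ e = (ρ_ X).inv) :
    ComonObj X where
  counit := e
  comul := d
  counit_comul := counit_comul
  comul_counit := comul_counit
  comul_assoc := by
    rw [whiskerLeft_comul_eq_whiskerRight_comul_associator e d counit_comul comul_counit]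

/-- The comonoid structure on a left idempotent `u : U ⟶ 𝟙_ C` satisfying the central equation:
its counit is `u` and its comultiplication is the inverse of `U ⊗ U ≅ U`. -/
noncomputable abbrev comonObjOfCentralIdempotent {U : C} (u : U ⟶ 𝟙_ C)
    (hcentral : u ▷ U ≫ (λ_ U).hom = U ◁ u ≫ (ρ_ U).hom) [IsIso (u ▷ U ≫ (λ_ U).hom)] :
    ComonObj U :=
  comonObjOfIsIsoComul u (inv (u ▷ U ≫ (λ_ U).hom))
    (by rw [IsIso.inv_comp_eq, Category.assoc, Iso.hom_inv_id, Category.comp_id])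
    (by rw [IsIso.inv_comp_eq, hcentral, Category.assoc, Iso.hom_inv_id, Category.comp_id])

end Comonoid

section Comonad

attribute [local instance] endofunctorMonoidalCategory Functor.obj.instComonObj

variable {C : Type*} [Category C]

/-- The comonad given by a comonoid object in the category of endofunctors. Whiskering `T ◁ -` has
components at `T.obj A`, so the left counit law of the comonad is the right counit law of `T`. -/
def comonadOfComonObj (T : C ⥤ C) [ComonObj T] : Comonad C where
  toFunctor := T
  ε := ComonObj.counit
  δ := ComonObj.comul
  coassoc A := by
    simpa [-ComonObj.comul_assoc] using! congr_app (ComonObj.comul_assoc T).symm A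
  left_counit A := by
    simpa [-ComonObj.comul_counit] using! congr_app (ComonObj.comul_counit T) A
  right_counit A := by
    simpa [-ComonObj.counit_comul] using! congr_app (ComonObj.counit_comul T) A

variable [MonoidalCategory C]

/-- The comonad `– ⊗ U` of a comonoid `U`: tensoring on the right is a monoidal functor into
endofunctors, hence carries `U` to a comonoid. -/
def tensorRightComonad (U : C) [ComonObj U] : Comonad C :=
  comonadOfComonObj ((tensoringRight C).obj U)

theorem tensorRightComonad_ε_app (U : C) [ComonObj U] (A : C) :
    (tensorRightComonad U).ε.app A = A ◁ ComonObj.counit ≫ (ρ_ A).hom :=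
  rfl

theorem tensorRightComonad_δ_app (U : C) [ComonObj U] (A : C) :
    (tensorRightComonad U).δ.app A = A ◁ ComonObj.comul ≫ (α_ A U U).inv :=
  rfl

theorem isIso_tensorRightComonad_δ (U : C) [ComonObj U] [IsIso (ComonObj.comul (X := U))] :
    IsIso (tensorRightComonad U).δ :=
  inferInstanceAs <| IsIso <|
    (tensoringRight C).map ComonObj.comul ≫ Functor.OplaxMonoidal.δ (tensoringRight C) U U

end Comonad

/-- Let `u : U ⟶ I` satisfy the central equation, with `m := λ_U ∘ (u ⊗ 𝟙_U)` invertible.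
Then the endofunctor `– ⊗ U` carries a comonad structure: the counit `ρ_A ∘ (𝟙_A ⊗ u)` and
comultiplication `α⁻¹ ∘ (𝟙_A ⊗ m⁻¹)` are natural, satisfy the two counit laws and
coassociativity; moreover this comonad is idempotent, the comultiplication being a natural
isomorphism. -/
theorem stmt9 {C : Type*} [Category C] [MonoidalCategory C]
    {U : C} (u : U ⟶ 𝟙_ C)
    (hcentral : (u ▷ U) ≫ (λ_ U).hom = (U ◁ u) ≫ (ρ_ U).hom)
    [IsIso ((u ▷ U) ≫ (λ_ U).hom)] :
    -- naturality of the counit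
    (∀ {A B : C} (f : A ⟶ B),
      (f ▷ U) ≫ ((B ◁ u) ≫ (ρ_ B).hom) = ((A ◁ u) ≫ (ρ_ A).hom) ≫ f) ∧
    -- naturality of the comultiplication
    (∀ {A B : C} (f : A ⟶ B),
      (f ▷ U) ≫ ((B ◁ inv ((u ▷ U) ≫ (λ_ U).hom)) ≫ (α_ B U U).inv) =
        ((A ◁ inv ((u ▷ U) ≫ (λ_ U).hom)) ≫ (α_ A U U).inv) ≫ ((f ▷ U) ▷ U)) ∧
    -- first counit law
    (∀ A : C,
      ((A ◁ inv ((u ▷ U) ≫ (λ_ U).hom)) ≫ (α_ A U U).inv) ≫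
        (((A ⊗ U) ◁ u) ≫ (ρ_ (A ⊗ U)).hom) = 𝟙 (A ⊗ U)) ∧
    -- second counit law
    (∀ A : C,
      ((A ◁ inv ((u ▷ U) ≫ (λ_ U).hom)) ≫ (α_ A U U).inv) ≫
        (((A ◁ u) ≫ (ρ_ A).hom) ▷ U) = 𝟙 (A ⊗ U)) ∧
    -- coassociativity
    (∀ A : C,
      ((A ◁ inv ((u ▷ U) ≫ (λ_ U).hom)) ≫ (α_ A U U).inv) ≫
        (((A ⊗ U) ◁ inv ((u ▷ U) ≫ (λ_ U).hom)) ≫ (α_ (A ⊗ U) U U).inv) =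
      ((A ◁ inv ((u ▷ U) ≫ (λ_ U).hom)) ≫ (α_ A U U).inv) ≫
        (((A ◁ inv ((u ▷ U) ≫ (λ_ U).hom)) ≫ (α_ A U U).inv) ▷ U)) ∧
    -- the comonad is idempotent: the comultiplication is a (natural) isomorphism
    (∀ A : C, IsIso ((A ◁ inv ((u ▷ U) ≫ (λ_ U).hom)) ≫ (α_ A U U).inv)) := by
  let : ComonObj U := comonObjOfCentralIdempotent u hcentral
  let T : Comonad C := tensorRightComonad U
  have : IsIso (ComonObj.comul (X := U)) := inferInstanceAs (IsIso (inv (u ▷ U ≫ (λ_ U).hom)))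
  have : IsIso T.δ := isIso_tensorRightComonad_δ U
  have hε (A : C) : A ◁ u ≫ (ρ_ A).hom = T.ε.app A := (tensorRightComonad_ε_app U A).symm
  have hδ (A : C) : A ◁ inv (u ▷ U ≫ (λ_ U).hom) ≫ (α_ A U U).inv = T.δ.app A :=
    (tensorRightComonad_δ_app U A).symm
  simp only [hε, hδ]
  exact ⟨fun f => T.ε.naturality f, fun f => T.δ.naturality f, T.left_counit, T.right_counit,
    fun A => (T.coassoc A).symm, fun A => inferInstanceAs (IsIso (T.δ.app A))⟩
end

section
/- Every cartesian monoidal category is bilinear: if C is a cartesian monoidal category, u : U ⟶ ⊤ is a central idempotent (equivalently, U is subterminal), and f, g : A ⟶ B × U are morphisms with f × 𝟙_U = g × 𝟙_U : A × U ⟶ (B × U) × U, then f = g. -/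
open CategoryTheory Limits

section ProductCancellation

variable {C : Type*} [Category C] {X Y Z W : C} [HasBinaryProduct X Z]

theorem isSplitEpi_prod_fst_of_hom (p : X ⟶ Z) : IsSplitEpi (prod.fst : X ⨯ Z ⟶ X) :=
  .mk' ⟨prod.lift (𝟙 X) p, prod.lift_fst _ _⟩

theorem eq_of_prod_map_eq [HasBinaryProduct Y W] [Epi (prod.fst : X ⨯ Z ⟶ X)]
    {f g : X ⟶ Y} {k l : Z ⟶ W} (h : prod.map f k = prod.map g l) : f = g := by
  rw [← cancel_epi (prod.fst : X ⨯ Z ⟶ X)]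
  calc
    prod.fst ≫ f = prod.map f k ≫ prod.fst := (prod.map_fst f k).symm
    _ = prod.map g l ≫ prod.fst := by rw [h]
    _ = prod.fst ≫ g := prod.map_fst g l

theorem stmt14_general [HasBinaryProduct Y W] (p : X ⟶ Z)
    {f g : X ⟶ Y} {k l : Z ⟶ W} (h : prod.map f k = prod.map g l) : f = g :=
  have := isSplitEpi_prod_fst_of_hom p
  eq_of_prod_map_eq h

end ProductCancellation

/-- Every cartesian monoidal category is bilinear: if `U` is the domain of a central
idempotent (equivalently, `U` is subterminal, i.e. the unique morphism `U ⟶ ⊤` is a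
monomorphism) and `f, g : A ⟶ B × U` satisfy `f × 𝟙_U = g × 𝟙_U`, then `f = g`. -/
theorem stmt14 {C : Type*} [Category C] [HasTerminal C] [HasBinaryProducts C]
    (U : C) (hU : Mono (terminal.from U))
    {A B : C} (f g : A ⟶ B ⨯ U)
    (h : prod.map f (𝟙 U) = prod.map g (𝟙 U)) : f = g :=
  stmt14_general (f ≫ prod.snd) h
end
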